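/- Let G be a graph on n vertices and 0 ≤ ℓ ≤ n. Then Z_{(ℓ)}(G) ≥ n − 1 if and only if the minimal ℓ-leaky forts of G are exactly: the singleton {v} for each vertex v of degree at most ℓ, together with every pair {u, w} of vertices both of degree at least ℓ + 1. -/

import Mathlib

/-!
The proof passes through the duality between leaky forcing sets and leaky forts: a set is an
ℓ-leaky forcing set iff it meets every ℓ-leaky fort (`isLeakyForcingSet_iff`). Passing to
complements, every forcing set has at least `n - 1` elements iff every pair of distinct vertices
contains a fort. A singleton `{v}` is a fort exactly when `deg v ≤ ℓ`
(`isLeakyFort_singleton_iff`), so the only pairs for which this is a genuine condition are those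
of two vertices of degree at least `ℓ + 1`, and such a pair contains a fort only by being one
(`le_leakyForcingNumber_iff`). If all those pairs are forts, then they and the singletons of low
degree are the minimal forts: any other fort has a proper subset of one of these two kinds.
-/


open SimpleGraph

namespace LF

variable {V : Type*}

/-- Vertices eventually forced blue, starting from `S`, with leak set `L`:
a blue vertex not in `L` whose every neighbor other than `w` is blue forces `w`. -/
inductive Forced (G : SimpleGraph V) (L S : Set V) : V → Prop
  | init (v : V) (hv : v ∈ S) : Forced G L S v
  | force (b w : V) (hb : Forced G L S b) (hbL : b ∉ L) (hadj : G.Adj b w)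
      (hall : ∀ u, G.Adj b u → u ≠ w → Forced G L S u) : Forced G L S w

/-- `S` is an ℓ-leaky forcing set of `G`. -/
def IsLeakyForcingSet (G : SimpleGraph V) (ℓ : ℕ) (S : Set V) : Prop :=
  ∀ L : Set V, L.ncard ≤ ℓ → ∀ v, Forced G L S v

/-- The ℓ-leaky forcing number `Z_{(ℓ)}(G)`. -/
noncomputable def leakyForcingNumber (G : SimpleGraph V) [Fintype V] (ℓ : ℕ) : ℕ :=
  sInf {k | ∃ S : Finset V, S.card = k ∧ IsLeakyForcingSet G ℓ ↑S}

/-- An ℓ-leaky fort: a nonempty set `F` such that at most ℓ vertices outside `F`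
have exactly one neighbor in `F`. -/
def IsLeakyFort (G : SimpleGraph V) (ℓ : ℕ) (F : Set V) : Prop :=
  F.Nonempty ∧ {v | v ∉ F ∧ ∃! u, u ∈ F ∧ G.Adj v u}.ncard ≤ ℓ

/-- The path graph on `n` vertices. -/
def pathGraph (n : ℕ) : SimpleGraph (Fin n) :=
  SimpleGraph.fromRel (fun i j => i.val + 1 = j.val)

/-- The cycle graph on `n` vertices. -/
def cycleGraph (n : ℕ) : SimpleGraph (Fin n) :=
  SimpleGraph.fromRel (fun i j => (i.val + 1) % n = j.val)

/-- The star graph on `n` vertices, with center `0`. -/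
def starGraph (n : ℕ) : SimpleGraph (Fin n) :=
  SimpleGraph.fromRel (fun i _ => i.val = 0)

/-- The generalized Petersen graph `P(n,k)`: `Sum.inl i` is the inner vertex `x_{i+1}`,
`Sum.inr i` is the outer vertex `y_{i+1}` (0-indexed). -/
def petersen (n k : ℕ) : SimpleGraph (Fin n ⊕ Fin n) :=
  SimpleGraph.fromRel (fun a b =>
    match a, b with
    | Sum.inr i, Sum.inr j => (i.val + 1) % n = j.val
    | Sum.inl i, Sum.inr j => i = j
    | Sum.inl i, Sum.inl j => (i.val + k) % n = j.val
    | _, _ => False)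

end LF

namespace LF

variable {V : Type*}

/-- Duality between forcing and forts. If a fort misses `S`, leaking at the vertices with exactly
one neighbor in the fort keeps it uncolored; conversely the uncolored vertices of a failed forcing
process form a fort. -/
lemma isLeakyForcingSet_iff [Finite V] (G : SimpleGraph V) (ℓ : ℕ) (S : Set V) :
    IsLeakyForcingSet G ℓ S ↔ ∀ F, IsLeakyFort G ℓ F → (S ∩ F).Nonempty := by
  constructor
  · intro hS F hF
    by_contra hne
    have key : ∀ v, Forced G {v | v ∉ F ∧ ∃! u, u ∈ F ∧ G.Adj v u} S v → v ∉ F := by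
      intro v hv
      induction hv with
      | init v hv => exact fun hvF => hne ⟨v, hv, hvF⟩
      | force b w _ hbL hadj _ ihb ih =>
        intro hwF
        refine hbL ⟨ihb, w, ⟨hwF, hadj⟩, ?_⟩
        rintro u ⟨huF, hbu⟩
        by_contra huw
        exact ih u hbu huw huF
    obtain ⟨v, hv⟩ := hF.1
    exact key v (hS _ hF.2 v) hv
  · intro h L hL v
    by_contra hv
    have hfort : IsLeakyFort G ℓ {x | ¬ Forced G L S x} := by
      refine ⟨⟨v, hv⟩, (Set.ncard_le_ncard ?_ (Set.toFinite L)).trans hL⟩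
      rintro b ⟨hb, w, ⟨hw, hbw⟩, huniq⟩
      by_contra hbL
      refine hw (Forced.force b w (not_not.mp hb) hbL hbw fun u hbu huw => ?_)
      by_contra hu
      exact huw (huniq u ⟨hu, hbu⟩)
    obtain ⟨x, hxS, hx⟩ := h _ hfort
    exact hx (Forced.init x hxS)

/-- The vertices outside `{v}` with exactly one neighbor in `{v}` are the neighbors of `v`. -/
lemma isLeakyFort_singleton_iff [Fintype V] (G : SimpleGraph V) [DecidableRel G.Adj]
    (ℓ : ℕ) (v : V) : IsLeakyFort G ℓ {v} ↔ G.degree v ≤ ℓ := by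
  have h : {x | x ∉ ({v} : Set V) ∧ ∃! u, u ∈ ({v} : Set V) ∧ G.Adj x u}
      = (G.neighborFinset v : Set V) := by
    ext x
    simp only [Set.mem_singleton_iff, Set.mem_ofPred_eq, SimpleGraph.coe_neighborFinset,
      SimpleGraph.mem_neighborSet]
    constructor
    · rintro ⟨_, u, ⟨rfl, hu⟩, _⟩
      exact hu.symm
    · intro hx
      exact ⟨hx.ne', v, ⟨rfl, hx.symm⟩, fun y hy => hy.1⟩
  rw [IsLeakyFort, h, Set.ncard_coe_finset, SimpleGraph.card_neighborFinset_eq_degree]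
  simp

/-- Every forcing set has at least `n - 1` vertices iff every set `{u, w}` contains a fort; for
this only pairs of vertices of high degree matter, since a vertex of low degree is a fort by
itself. -/
lemma le_leakyForcingNumber_iff [Fintype V] (G : SimpleGraph V) [DecidableRel G.Adj] (ℓ : ℕ) :
    Fintype.card V - 1 ≤ leakyForcingNumber G ℓ ↔
      ∀ u w, u ≠ w → ℓ + 1 ≤ G.degree u → ℓ + 1 ≤ G.degree w → IsLeakyFort G ℓ {u, w} := by
  classical
  constructor
  · intro h u w huw hu hw
    by_contra hnot
    -- Otherwise `{u, w}` contains no fort at all, and its complement is a forcing set.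
    have hforce : IsLeakyForcingSet G ℓ (({u, w}ᶜ : Finset V) : Set V) := by
      rw [isLeakyForcingSet_iff]
      intro F hF
      by_contra hne
      have hsub : F ⊆ {u, w} := by
        intro x hx
        by_contra hx'
        exact hne ⟨x, by simpa [and_comm] using hx', hx⟩
      rcases Set.subset_pair_iff_eq.mp hsub with rfl | rfl | rfl | rfl
      · exact Set.not_nonempty_empty hF.1
      · have := (isLeakyFort_singleton_iff G ℓ u).mp hF
        omega
      · have := (isLeakyFort_singleton_iff G ℓ w).mp hF
        omega
      · exact hnot hF
    have hle : leakyForcingNumber G ℓ ≤ ({u, w}ᶜ : Finset V).card :=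
      Nat.sInf_le ⟨_, rfl, hforce⟩
    rw [Finset.card_compl, Finset.card_pair huw] at hle
    have h2 : 2 ≤ Fintype.card V := by
      rw [← Finset.card_pair huw]
      exact Finset.card_le_univ _
    omega
  · intro h
    have hne : {k | ∃ S : Finset V, S.card = k ∧ IsLeakyForcingSet G ℓ ↑S}.Nonempty :=
      ⟨_, Finset.univ, rfl, fun L _ v => Forced.init v (by simp)⟩
    refine le_csInf hne ?_
    rintro _ ⟨S, rfl, hS⟩
    rw [isLeakyForcingSet_iff] at hS
    by_contra hlt
    have hcompl : 1 < (Sᶜ).card := by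
      rw [Finset.card_compl]
      omega
    obtain ⟨u, hu, w, hw, huw⟩ := Finset.one_lt_card.mp hcompl
    rw [Finset.mem_compl] at hu hw
    have hdeg : ∀ v ∉ S, ℓ + 1 ≤ G.degree v := by
      intro v hv
      by_contra hlow
      obtain ⟨x, hxS, rfl⟩ := hS {v} ((isLeakyFort_singleton_iff G ℓ v).mpr (by omega))
      exact hv hxS
    obtain ⟨x, hxS, rfl | rfl⟩ := hS {u, w} (h u w huw (hdeg u hu) (hdeg w hw))
    · exact hu hxS
    · exact hw hxS

end LF

theorem stmt17 {V : Type*} [Fintype V] (G : SimpleGraph V) [DecidableRel G.Adj]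
    (ℓ : ℕ) (hℓ : ℓ ≤ Fintype.card V) :
    Fintype.card V - 1 ≤ LF.leakyForcingNumber G ℓ ↔
      ∀ F : Set V,
        (LF.IsLeakyFort G ℓ F ∧
          ∀ F' ⊆ F, LF.IsLeakyFort G ℓ F' → F' = F) ↔
        ((∃ v, G.degree v ≤ ℓ ∧ F = {v}) ∨
         (∃ u w, u ≠ w ∧ ℓ + 1 ≤ G.degree u ∧ ℓ + 1 ≤ G.degree w ∧
           F = {u, w})) := by
  rw [LF.le_leakyForcingNumber_iff]
  constructor
  · intro h F
    constructor
    · rintro ⟨hF, hmin⟩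
      by_cases hlow : ∃ v ∈ F, G.degree v ≤ ℓ
      · obtain ⟨v, hvF, hv⟩ := hlow
        exact Or.inl ⟨v, hv, (hmin {v} (Set.singleton_subset_iff.mpr hvF)
          ((LF.isLeakyFort_singleton_iff G ℓ v).mpr hv)).symm⟩
      · push Not at hlow
        obtain ⟨u, hu⟩ := hF.1
        have hw : ∃ w ∈ F, w ≠ u := by
          by_contra! hall
          obtain rfl : F = {u} := Set.eq_singleton_iff_unique_mem.mpr ⟨hu, hall⟩
          have := (LF.isLeakyFort_singleton_iff G ℓ u).mp hF
          have := hlow u hu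
          omega
        obtain ⟨w, hw, hwu⟩ := hw
        exact Or.inr ⟨u, w, hwu.symm, hlow u hu, hlow w hw,
          (hmin {u, w} (Set.pair_subset hu hw)
            (h u w hwu.symm (hlow u hu) (hlow w hw))).symm⟩
    · rintro (⟨v, hv, rfl⟩ | ⟨u, w, huw, hu, hw, rfl⟩)
      · exact ⟨(LF.isLeakyFort_singleton_iff G ℓ v).mpr hv,
          fun F' hsub hF' => hF'.1.subset_singleton_iff.mp hsub⟩
      · refine ⟨h u w huw hu hw, fun F' hsub hF' => ?_⟩
        rcases Set.subset_pair_iff_eq.mp hsub with rfl | rfl | rfl | rfl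
        · exact absurd hF'.1 Set.not_nonempty_empty
        · have := (LF.isLeakyFort_singleton_iff G ℓ u).mp hF'
          omega
        · have := (LF.isLeakyFort_singleton_iff G ℓ w).mp hF'
          omega
        · rfl
  · intro h u w huw hu hw
    exact ((h {u, w}).mpr (Or.inr ⟨u, w, huw, hu, hw, rfl⟩)).1
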